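/- Strong normalization of σπα: the one-step σπα-reduction is strongly normalizing on the set of terms, on the set of substitutions, and the one-step reduction ⇝ (including α₂) is strongly normalizing on the set of judgements of the form Γ ⊢ M; that is, there is no infinite reduction sequence in any of these three settings. -/

import Mathlib

/- Named terms and substitutions of the λπ-calculus. Variables are natural numbers. -/
mutual
inductive Tm : Type
  | var : ℕ → Tm
  | app : Tm → Tm → Tm
  | lam : ℕ → Tm → Tm
  | clos : Subst → Tm → Tm
inductive Subst : Type
  | id : Subst
  | pi : ℕ → Subst
  | cons : Subst → Tm → ℕ → Subst
  | comp : Subst → Subst → Subst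
end

/- Contexts are lists of variables; the head of the list is the *rightmost* variable,
so the context `Γ, a` of the paper is `a :: Γ`. -/
mutual
/-- `WfTm Γ M` is the judgement `Γ ⊢ M`. -/
inductive WfTm : List ℕ → Tm → Prop
  | var (Γ : List ℕ) (a : ℕ) : WfTm (a :: Γ) (.var a)
  | weak {Γ : List ℕ} {a : ℕ} (b : ℕ) : a ≠ b → WfTm Γ (.var a) → WfTm (b :: Γ) (.var a)
  | app {Γ M N} : WfTm Γ M → WfTm Γ N → WfTm Γ (.app M N)
  | lam {Γ a M} : WfTm (a :: Γ) M → WfTm Γ (.lam a M)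
  | clos {Γ s Δ M} : WfSub Γ s Δ → WfTm Δ M → WfTm Γ (.clos s M)
/-- `WfSub Γ s Δ` is the judgement `Γ ⊢ s ▷ Δ`. -/
inductive WfSub : List ℕ → Subst → List ℕ → Prop
  | id (Γ) : WfSub Γ .id Γ
  | pi (Γ a) : WfSub (a :: Γ) (.pi a) Γ
  | cons {Γ s Δ N} (a) : WfSub Γ s Δ → WfTm Γ N → WfSub Γ (.cons s N a) (a :: Δ)
  | comp {Γ s Δ q Θ} : WfSub Γ s Δ → WfSub Δ q Θ → WfSub Γ (.comp s q) Θ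
end

/-- The operator `O_{λa}` on sequences of finite sets (sequences are 0-indexed:
index `n` corresponds to the paper's index `n+1`). -/
def Olam (a : ℕ) (A : ℕ → Finset ℕ) : ℕ → Finset ℕ
  | 0 => (A 0).erase a ∪ A 1
  | n + 1 => A (n + 2)

/-- The operator `O_π`. -/
def Opi (A : ℕ → Finset ℕ) : ℕ → Finset ℕ
  | 0 => ∅
  | n + 1 => A n

mutual
/-- The free-variable sequence of a term: `FV M n` is the paper's `FV_{n+1}(M)`. -/
def FV : Tm → ℕ → Finset ℕ
  | .var a => fun n => if n = 0 then {a} else ∅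
  | .app M N => fun n => FV M n ∪ FV N n
  | .lam a M => Olam a (FV M)
  | .clos s M => Osub s (FV M)
/-- The operator `O_s` associated with a substitution `s`. -/
def Osub : Subst → (ℕ → Finset ℕ) → (ℕ → Finset ℕ)
  | .id => fun A => A
  | .pi _ => fun A => Opi A
  | .cons s N a => fun A n => Osub s (Olam a A) n ∪ FV N n
  | .comp s q => fun A => Osub s (Osub q A)
end

/-- Iterated abstraction `λΓ.M` (recall the head of the list is the rightmost variable). -/
def lamCtx : List ℕ → Tm → Tm
  | [], M => M
  | a :: Γ, M => lamCtx Γ (.lam a M)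

/-- Free variables of a judgement: `FV(Γ ⊢ M) = FV(λΓ.M)`. -/
def FVJ (Γ : List ℕ) (M : Tm) : ℕ → Finset ℕ := FV (lamCtx Γ M)

/-- Iterated lifting `⇑_Δ(s)`. -/
def Uparrow : List ℕ → Subst → Subst
  | [], s => s
  | a :: Δ, s => .cons (.comp (.pi a) (Uparrow Δ s)) (.var a) a

/- One-step reduction of the λπ-calculus (compatible closure).  The Boolean
parameter tells whether the rule `Beta` is allowed: `StepTm true` is λπ-reduction,
`StepTm false` is σπα-reduction. -/
mutual
inductive StepTm : Bool → Tm → Tm → Prop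
  | beta {a : ℕ} {M N : Tm} :
      StepTm true (.app (.lam a M) N) (.clos (.cons .id N a) M)
  | abs {β : Bool} {s : Subst} {a : ℕ} {M : Tm} :
      StepTm β (.clos s (.lam a M))
        (.lam a (.clos (.cons (.comp (.pi a) s) (.var a) a) M))
  | app {β : Bool} {s : Subst} {M N : Tm} :
      StepTm β (.clos s (.app M N)) (.app (.clos s M) (.clos s N))
  | consVar {β : Bool} {s : Subst} {N : Tm} {a : ℕ} :
      StepTm β (.clos (.cons s N a) (.var a)) N
  | new {β : Bool} {s : Subst} {N : Tm} {a b : ℕ} : a ≠ b →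
      StepTm β (.clos (.cons s N a) (.var b)) (.clos s (.var b))
  | idVar {β : Bool} {a : ℕ} : StepTm β (.clos .id (.var a)) (.var a)
  | clos {β : Bool} {s q : Subst} {M : Tm} :
      StepTm β (.clos s (.clos q M)) (.clos (.comp s q) M)
  | pi1 {β : Bool} {a b : ℕ} : a ≠ b → StepTm β (.clos (.pi a) (.var b)) (.var b)
  | pi2 {β : Bool} {s : Subst} {a b : ℕ} : a ≠ b →
      StepTm β (.clos (.comp s (.pi a)) (.var b)) (.clos s (.var b))
  | alpha1 {β : Bool} {a b : ℕ} {M : Tm} :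
      (∃ i, a ∈ FV (.lam a M) i) → (∀ i, b ∉ FV (.lam a M) i) →
      StepTm β (.lam a M) (.lam b (.clos (.cons (.pi b) (.var b) a) M))
  | lamCong {β : Bool} {a : ℕ} {M₁ M₂ : Tm} :
      StepTm β M₁ M₂ → StepTm β (.lam a M₁) (.lam a M₂)
  | appL {β : Bool} {M₁ M₂ N : Tm} : StepTm β M₁ M₂ → StepTm β (.app M₁ N) (.app M₂ N)
  | appR {β : Bool} {M N₁ N₂ : Tm} : StepTm β N₁ N₂ → StepTm β (.app M N₁) (.app M N₂)
  | closL {β : Bool} {s₁ s₂ : Subst} {M : Tm} :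
      StepSub β s₁ s₂ → StepTm β (.clos s₁ M) (.clos s₂ M)
  | closR {β : Bool} {s : Subst} {M₁ M₂ : Tm} :
      StepTm β M₁ M₂ → StepTm β (.clos s M₁) (.clos s M₂)
inductive StepSub : Bool → Subst → Subst → Prop
  | ass {β : Bool} {s q r : Subst} :
      StepSub β (.comp s (.comp q r)) (.comp (.comp s q) r)
  | idR {β : Bool} {s : Subst} : StepSub β (.comp s .id) s
  | idShift {β : Bool} {a : ℕ} : StepSub β (.comp .id (.pi a)) (.pi a)
  | consShift {β : Bool} {s : Subst} {N : Tm} {a : ℕ} :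
      StepSub β (.comp (.cons s N a) (.pi a)) s
  | map {β : Bool} {s q : Subst} {N : Tm} {a : ℕ} :
      StepSub β (.comp s (.cons q N a)) (.cons (.comp s q) (.clos s N) a)
  | consL {β : Bool} {s₁ s₂ : Subst} {N : Tm} {a : ℕ} :
      StepSub β s₁ s₂ → StepSub β (.cons s₁ N a) (.cons s₂ N a)
  | consR {β : Bool} {s : Subst} {N₁ N₂ : Tm} {a : ℕ} :
      StepTm β N₁ N₂ → StepSub β (.cons s N₁ a) (.cons s N₂ a)
  | compL {β : Bool} {s₁ s₂ q : Subst} :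
      StepSub β s₁ s₂ → StepSub β (.comp s₁ q) (.comp s₂ q)
  | compR {β : Bool} {s q₁ q₂ : Subst} :
      StepSub β q₁ q₂ → StepSub β (.comp s q₁) (.comp s q₂)
end

/-- One-step reduction `⇝` on judgements `Γ ⊢ M`, including the rule `α₂`.
`StepJ true` is λπ, `StepJ false` is σπα. -/
inductive StepJ (β : Bool) : List ℕ × Tm → List ℕ × Tm → Prop
  | step {Γ : List ℕ} {M₁ M₂ : Tm} : StepTm β M₁ M₂ → StepJ β (Γ, M₁) (Γ, M₂)
  | alpha2 {Γ Δ : List ℕ} {a b : ℕ} {M : Tm} :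
      (∃ i, a ∈ FVJ (Δ ++ [a]) M i) → (∀ i, b ∉ FVJ (Δ ++ [a]) M i) →
      StepJ β (Δ ++ a :: Γ, M)
        (Δ ++ b :: Γ, .clos (Uparrow Δ (.cons (.pi b) (.var b) a)) M)

/- Name-free (de Bruijn) terms and substitutions. -/
mutual
inductive NTm : Type
  | one : NTm
  | app : NTm → NTm → NTm
  | lam : NTm → NTm
  | clos : NSub → NTm → NTm
inductive NSub : Type
  | id : NSub
  | pi : NSub
  | cons : NSub → NTm → NSub
  | comp : NSub → NSub → NSub
end

/-- `piIter n` is the left-nested composition of `n+1` copies of `π`. -/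
def piIter : ℕ → NSub
  | 0 => .pi
  | k + 1 => .comp (piIter k) .pi

/-- `dbr n` is the de Bruijn index `n+1̲`: `dbr 0 = 1` and
`dbr (n+1) = ((…(π∘π)∘…)∘π)∘1` with `n+1` occurrences of `π`. -/
def dbr : ℕ → NTm
  | 0 => .one
  | n + 1 => .clos (piIter n) .one

/- One-step reduction of λσ (`NStepTm true`) resp. σ (`NStepTm false`)
on name-free terms/substitutions. -/
mutual
inductive NStepTm : Bool → NTm → NTm → Prop
  | beta {U V : NTm} : NStepTm true (.app (.lam U) V) (.clos (.cons .id V) U)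
  | abs {β : Bool} {u : NSub} {U : NTm} :
      NStepTm β (.clos u (.lam U)) (.lam (.clos (.cons (.comp .pi u) .one) U))
  | app {β : Bool} {u : NSub} {U V : NTm} :
      NStepTm β (.clos u (.app U V)) (.app (.clos u U) (.clos u V))
  | consVar {β : Bool} {u : NSub} {V : NTm} : NStepTm β (.clos (.cons u V) .one) V
  | idVar {β : Bool} : NStepTm β (.clos .id .one) .one
  | clos {β : Bool} {u v : NSub} {U : NTm} :
      NStepTm β (.clos u (.clos v U)) (.clos (.comp u v) U)
  | lamCong {β : Bool} {U₁ U₂ : NTm} : NStepTm β U₁ U₂ → NStepTm β (.lam U₁) (.lam U₂)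
  | appL {β : Bool} {U₁ U₂ V : NTm} : NStepTm β U₁ U₂ → NStepTm β (.app U₁ V) (.app U₂ V)
  | appR {β : Bool} {U V₁ V₂ : NTm} : NStepTm β V₁ V₂ → NStepTm β (.app U V₁) (.app U V₂)
  | closL {β : Bool} {u₁ u₂ : NSub} {U : NTm} :
      NStepSub β u₁ u₂ → NStepTm β (.clos u₁ U) (.clos u₂ U)
  | closR {β : Bool} {u : NSub} {U₁ U₂ : NTm} :
      NStepTm β U₁ U₂ → NStepTm β (.clos u U₁) (.clos u U₂)
inductive NStepSub : Bool → NSub → NSub → Prop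
  | ass {β : Bool} {u v w : NSub} : NStepSub β (.comp u (.comp v w)) (.comp (.comp u v) w)
  | idR {β : Bool} {u : NSub} : NStepSub β (.comp u .id) u
  | idShift {β : Bool} : NStepSub β (.comp .id .pi) .pi
  | consShift {β : Bool} {u : NSub} {V : NTm} : NStepSub β (.comp (.cons u V) .pi) u
  | map {β : Bool} {u v : NSub} {V : NTm} :
      NStepSub β (.comp u (.cons v V)) (.cons (.comp u v) (.clos u V))
  | consL {β : Bool} {u₁ u₂ : NSub} {V : NTm} :
      NStepSub β u₁ u₂ → NStepSub β (.cons u₁ V) (.cons u₂ V)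
  | consR {β : Bool} {u : NSub} {V₁ V₂ : NTm} :
      NStepTm β V₁ V₂ → NStepSub β (.cons u V₁) (.cons u V₂)
  | compL {β : Bool} {u₁ u₂ v : NSub} :
      NStepSub β u₁ u₂ → NStepSub β (.comp u₁ v) (.comp u₂ v)
  | compR {β : Bool} {u v₁ v₂ : NSub} :
      NStepSub β v₁ v₂ → NStepSub β (.comp u v₁) (.comp u v₂)
end

/- The correspondence `(Γ ⊢ M) ⟹ U` resp. `(Γ ⊢ s ▷ Δ) ⟹ u` between judgements and
name-free terms/substitutions (Definition 7.6 of the paper). -/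
mutual
inductive TrTm : List ℕ → Tm → NTm → Prop
  | var (Γ : List ℕ) (a : ℕ) : TrTm (a :: Γ) (.var a) (dbr 0)
  | weak {Γ : List ℕ} {a : ℕ} {n : ℕ} (b : ℕ) : a ≠ b →
      TrTm Γ (.var a) (dbr n) → TrTm (b :: Γ) (.var a) (dbr (n + 1))
  | app {Γ M N U V} : TrTm Γ M U → TrTm Γ N V → TrTm Γ (.app M N) (.app U V)
  | lam {Γ a M U} : TrTm (a :: Γ) M U → TrTm Γ (.lam a M) (.lam U)
  | clos {Γ s Δ M u U} : TrSub Γ s Δ u → TrTm Δ M U → TrTm Γ (.clos s M) (.clos u U)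
inductive TrSub : List ℕ → Subst → List ℕ → NSub → Prop
  | id (Γ) : TrSub Γ .id Γ .id
  | pi (Γ a) : TrSub (a :: Γ) (.pi a) Γ .pi
  | cons {Γ s Δ N u V} (a) : TrSub Γ s Δ u → TrTm Γ N V →
      TrSub Γ (.cons s N a) (a :: Δ) (.cons u V)
  | comp {Γ s Δ q Θ u v} : TrSub Γ s Δ u → TrSub Δ q Θ v →
      TrSub Γ (.comp s q) Θ (.comp u v)
end

/-!
Reduction is interpreted in a well-founded lexicographic path order on labelled binary trees. The
label of a closure bounds the nesting of abstractions in its reducts, so (Abs) strictly lowers it.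
An abstraction `λa.M` carries a positive label exactly when `a` still occurs free in it, that is,
when (α₁) applies to it; (α₁) replaces `a` by a variable that does not occur and so resets the
label. Other steps do not raise it, because reduction never creates free variables: it can only
move them to earlier positions of the sequence `FV M`, so the tails of the sequence shrink.

For judgements, read `Γ ⊢ M` as the term `λΓ.M`: a step (α₂) becomes a step (α₁) at the variable
in question, followed by steps (Abs) pushing the renaming `⟨π_b, b\a⟩` under the abstractions over
`Δ`.
-/

theorem not_exists_chain_of_wellFounded_swap {α : Type*} {r : α → α → Prop}
    (h : WellFounded (Function.swap r)) : ¬ ∃ f : ℕ → α, ∀ n, r (f n) (f (n + 1)) :=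
  fun ⟨f, hf⟩ => (wellFounded_iff_isEmpty_descending_chain.1 h).false ⟨f, hf⟩

/-! ### The lexicographic path order on binary trees -/

section LexPath

open BinaryTree

/-- The lexicographic path order on binary trees whose labels play the role of function symbols,
ordered by precedence. Right subtrees are compared before left ones, because (Clos) and (Ass) shrink
the right argument of a closure or composition at the expense of the left one. -/
inductive LexPathLT {α : Type*} [LT α] : BinaryTree α → BinaryTree α → Prop
  | nil {r x y} : LexPathLT nil (node r x y)
  | left {r x y} : LexPathLT x (node r x y)
  | right {r x y} : LexPathLT y (node r x y)
  | of_lt_left {r x y t} : LexPathLT t x → LexPathLT t (node r x y)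
  | of_lt_right {r x y t} : LexPathLT t y → LexPathLT t (node r x y)
  | label {r r' x x' y y'} : r' < r → LexPathLT x' (node r x y) → LexPathLT y' (node r x y) →
      LexPathLT (node r' x' y') (node r x y)
  | lex_right {r x x' y y'} : LexPathLT y' y → LexPathLT x' (node r x y) →
      LexPathLT (node r x' y') (node r x y)
  | lex_left {r x x' y} : LexPathLT x' x → LexPathLT (node r x' y) (node r x y)

local infix:50 " ≺ " => LexPathLT

namespace LexPathLT

section WellFounded

variable {α : Type*} [LT α]

theorem acc_nil : Acc LexPathLT (BinaryTree.nil : BinaryTree α) :=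
  ⟨_, nofun⟩

variable [WellFoundedLT α]

theorem acc_node (r : α) {x y : BinaryTree α} (hx : Acc LexPathLT x) (hy : Acc LexPathLT y) :
    Acc LexPathLT (node r x y) := by
  induction r using WellFoundedLT.induction generalizing x y with
  | ind r acc_of_label_lt =>
  induction hy generalizing x with
  | intro y hy acc_of_right_lt =>
  induction hx with
  | intro x hx acc_of_left_lt =>
  refine ⟨_, fun t ht => ?_⟩
  induction t with
  | nil => exact acc_nil
  | node r' x' y' ihx' ihy' =>
    cases ht with
    | left => exact ⟨_, hx⟩
    | right => exact ⟨_, hy⟩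
    | of_lt_left h => exact hx _ h
    | of_lt_right h => exact hy _ h
    | label hr h h' => exact acc_of_label_lt _ hr (ihx' h) (ihy' h')
    | lex_right h h' => exact acc_of_right_lt _ h (ihx' h')
    | lex_left h => exact acc_of_left_lt _ h

theorem wellFounded : WellFounded (LexPathLT : BinaryTree α → BinaryTree α → Prop) := by
  refine ⟨fun t => ?_⟩
  induction t with
  | nil => exact acc_nil
  | node r x y hx hy => exact acc_node r hx hy

end WellFounded

section PartialOrder

variable {α : Type*} [PartialOrder α] {p q r r₁ r₂ : α} {x x' y y' z : BinaryTree α}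

theorem node_of_right_lt (hr : r₁ ≤ r) (hy : y' ≺ y) (hx : x' ≺ node r x y) :
    node r₁ x' y' ≺ node r x y := by
  rcases hr.lt_or_eq with hlt | rfl
  · exact .label hlt hx (.of_lt_right hy)
  · exact .lex_right hy hx

theorem node_of_left_lt (hr : r₁ ≤ r) (hx : x' ≺ x) : node r₁ x' y ≺ node r x y := by
  rcases hr.lt_or_eq with hlt | rfl
  · exact .label hlt (.of_lt_left hx) .right
  · exact .lex_left hx

theorem node_assoc (h₁ : r₁ ≤ r) (h₂ : r₂ ≤ r) :
    node r₁ (node r₂ x y) z ≺ node r x (node q y z) :=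
  node_of_right_lt h₁ .right (node_of_right_lt h₂ .left .left)

theorem node_distrib (hp : p < r) (h₁ : r₁ ≤ r) (h₂ : r₂ ≤ r) :
    node p (node r₁ x y) (node r₂ x z) ≺ node r x (node q y z) :=
  .label hp (node_of_right_lt h₁ .left .left) (node_of_right_lt h₂ .right .left)

end PartialOrder

end LexPathLT

end LexPath

/-! ### Reduction does not create free variables -/

/-- The unions of the tails of a sequence of finite sets. The pointwise order on tails is the
comparison of free-variable sequences that reduction respects: (π₁) and (π₂) move free variables to
earlier positions, so the sequences themselves do not decrease. -/
def tail (A : ℕ → Finset ℕ) (n : ℕ) : Set ℕ := ⋃ k, (A (k + n) : Set ℕ)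

section Tail

variable {A B : ℕ → Finset ℕ}

theorem mem_tail_zero {x : ℕ} : x ∈ tail A 0 ↔ ∃ i, x ∈ A i := by
  simp [tail]

theorem tail_eq_union_tail_succ (A : ℕ → Finset ℕ) (n : ℕ) :
    tail A n = ↑(A n) ∪ tail A (n + 1) := by
  simpa [tail, add_right_comm, add_assoc] using
    (Set.union_iUnion_nat_succ fun k => (A (k + n) : Set ℕ)).symm

theorem tail_mono : Monotone tail :=
  fun _ _ h n => Set.iUnion_mono fun k => Finset.coe_subset.2 (h (k + n))

theorem tail_sup (A B : ℕ → Finset ℕ) : tail (A ⊔ B) = tail A ⊔ tail B := by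
  funext n
  simp [tail, Set.iUnion_union_distrib]

theorem tail_Olam_succ (a : ℕ) (A : ℕ → Finset ℕ) (n : ℕ) :
    tail (Olam a A) (n + 1) = tail A (n + 2) := rfl

theorem tail_Olam_zero (a : ℕ) (A : ℕ → Finset ℕ) :
    tail (Olam a A) 0 = tail A 0 \ {a} ∪ tail A 1 := by
  rw [tail_eq_union_tail_succ, tail_Olam_succ, tail_eq_union_tail_succ A 0,
    tail_eq_union_tail_succ A 1]
  ext x
  simp only [Olam, Finset.coe_union, Finset.coe_erase, zero_add, Set.mem_union, Set.mem_sdiff,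
    SetLike.mem_coe, Set.mem_singleton_iff, Nat.reduceAdd]
  tauto

theorem tail_Opi_succ (A : ℕ → Finset ℕ) (n : ℕ) : tail (Opi A) (n + 1) = tail A n := rfl

theorem tail_Opi_zero (A : ℕ → Finset ℕ) : tail (Opi A) 0 = tail A 0 := by
  rw [tail_eq_union_tail_succ, tail_Opi_succ]
  simp [Opi]

theorem tail_le_tail_Opi (A : ℕ → Finset ℕ) : tail A ≤ tail (Opi A)
  | 0 => (tail_Opi_zero A).ge
  | n + 1 => by
    rw [tail_Opi_succ, tail_eq_union_tail_succ A n]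
    exact Set.subset_union_right

theorem tail_Olam_le_tail_Olam (a : ℕ) (h : tail A ≤ tail B) : tail (Olam a A) ≤ tail (Olam a B)
  | 0 => by
    rw [tail_Olam_zero, tail_Olam_zero]
    exact Set.union_subset_union (Set.sdiff_subset_sdiff_left (h 0)) (h 1)
  | n + 1 => h (n + 2)

theorem tail_Opi_le_tail_Opi (h : tail A ≤ tail B) : tail (Opi A) ≤ tail (Opi B)
  | 0 => by
    rw [tail_Opi_zero, tail_Opi_zero]
    exact h 0
  | n + 1 => h n

theorem Olam_Opi (a : ℕ) (A : ℕ → Finset ℕ) : Olam a (Opi A) = A := by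
  funext n
  cases n <;> simp [Olam, Opi]

end Tail

theorem FV_app (M N : Tm) : FV (.app M N) = FV M ⊔ FV N := rfl

theorem Osub_cons (s : Subst) (N : Tm) (a : ℕ) (A : ℕ → Finset ℕ) :
    Osub (.cons s N a) A = Osub s (Olam a A) ⊔ FV N := rfl

theorem tail_Osub_le_tail_Osub (s : Subst) {A B : ℕ → Finset ℕ} (h : tail A ≤ tail B) :
    tail (Osub s A) ≤ tail (Osub s B) := by
  match s with
  | .id => exact h
  | .pi _ => exact tail_Opi_le_tail_Opi h
  | .cons s N a =>
    simp only [Osub_cons, tail_sup]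
    exact sup_le_sup_right (tail_Osub_le_tail_Osub s (tail_Olam_le_tail_Olam a h)) _
  | .comp s q => exact tail_Osub_le_tail_Osub s (tail_Osub_le_tail_Osub q h)

theorem tail_Osub_sup_Osub_le (s : Subst) (A B : ℕ → Finset ℕ) :
    tail (Osub s A ⊔ Osub s B) ≤ tail (Osub s (A ⊔ B)) := by
  rw [tail_sup]
  exact sup_le (tail_Osub_le_tail_Osub s (tail_mono le_sup_left))
    (tail_Osub_le_tail_Osub s (tail_mono le_sup_right))

theorem FV_le_Olam_of_ne {a b : ℕ} (h : a ≠ b) : FV (.var b) ≤ Olam a (FV (.var b)) := by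
  intro n
  cases n <;> simp [FV, Olam, h.symm]

theorem FV_lam_clos_lift (s : Subst) (a : ℕ) (M : Tm) :
    FV (.lam a (.clos (.cons (.comp (.pi a) s) (.var a) a) M)) = FV (.clos s (.lam a M)) := by
  funext n
  cases n <;> simp [FV, Osub, Olam, Opi]

theorem FV_lam_rename (a b : ℕ) (M : Tm) :
    FV (.lam b (.clos (.cons (.pi b) (.var b) a) M)) = FV (.lam a M) := by
  funext n
  cases n <;> simp [FV, Osub, Olam, Opi]

mutual

theorem StepTm.tail_FV_le {β : Bool} : ∀ {M N : Tm}, StepTm β M N → tail (FV N) ≤ tail (FV M)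
  | _, _, .beta => le_rfl
  | _, _, .abs => (congrArg tail (FV_lam_clos_lift _ _ _)).le
  | _, _, .app => tail_Osub_sup_Osub_le _ _ _
  | _, _, .consVar => tail_mono le_sup_right
  | _, _, .new (s := s) hab =>
    (tail_Osub_le_tail_Osub s (tail_mono (FV_le_Olam_of_ne hab))).trans (tail_mono le_sup_left)
  | _, _, .idVar => le_rfl
  | _, _, .clos => le_rfl
  | _, _, .pi1 _ => tail_le_tail_Opi _
  | _, _, .pi2 (s := s) _ => tail_Osub_le_tail_Osub s (tail_le_tail_Opi _)
  | _, _, .alpha1 _ _ => (congrArg tail (FV_lam_rename _ _ _)).le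
  | _, _, .lamCong h => tail_Olam_le_tail_Olam _ h.tail_FV_le
  | _, _, .appL h => by simpa only [FV_app, tail_sup] using sup_le_sup_right h.tail_FV_le _
  | _, _, .appR h => by simpa only [FV_app, tail_sup] using sup_le_sup_left h.tail_FV_le _
  | _, _, .closL h => h.tail_Osub_le _
  | _, _, .closR (s := s) h => tail_Osub_le_tail_Osub s h.tail_FV_le

theorem StepSub.tail_Osub_le {β : Bool} :
    ∀ {s q : Subst}, StepSub β s q → ∀ A, tail (Osub q A) ≤ tail (Osub s A)
  | _, _, .ass, _ => le_rfl
  | _, _, .idR, _ => le_rfl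
  | _, _, .idShift, _ => le_rfl
  | _, _, .consShift (s := s) (a := a), A => by
    calc tail (Osub s A) = tail (Osub s (Olam a (Opi A))) := by rw [Olam_Opi]
      _ ≤ _ := tail_mono le_sup_left
  | _, _, .map, _ => tail_Osub_sup_Osub_le _ _ _
  | _, _, .consL h, _ => by
    simpa only [Osub_cons, tail_sup] using sup_le_sup_right (h.tail_Osub_le _) _
  | _, _, .consR h, _ => by
    simpa only [Osub_cons, tail_sup] using sup_le_sup_left h.tail_FV_le _
  | _, _, .compL h, _ => h.tail_Osub_le _
  | _, _, .compR (s := s) h, _ => tail_Osub_le_tail_Osub s (h.tail_Osub_le _)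

end

/-! ### Abstraction depth -/

mutual

/-- An upper bound for the nesting depth of abstractions in all σπα-reducts of a term. A closure
adds the depths of its two parts, since a substituted term may end up under every abstraction of the
body. -/
def Tm.lamDepth : Tm → ℕ
  | .var _ => 0
  | .app M N => max M.lamDepth N.lamDepth
  | .lam _ M => M.lamDepth + 1
  | .clos s M => s.lamDepth + M.lamDepth

/-- The analogue of `Tm.lamDepth` for substitutions, bounding the depths of the substituted
terms. -/
def Subst.lamDepth : Subst → ℕ
  | .id => 0
  | .pi _ => 0
  | .cons s N _ => max s.lamDepth N.lamDepth
  | .comp s q => s.lamDepth + q.lamDepth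

end

mutual

theorem StepTm.lamDepth_le : ∀ {M N : Tm}, StepTm false M N → N.lamDepth ≤ M.lamDepth
  | _, _, .abs | _, _, .app | _, _, .consVar | _, _, .new _ | _, _, .idVar | _, _, .clos
  | _, _, .pi1 _ | _, _, .pi2 _ | _, _, .alpha1 _ _ => by
    simp only [Tm.lamDepth, Subst.lamDepth]; omega
  | _, _, .lamCong h | _, _, .appL h | _, _, .appR h | _, _, .closR h => by
    have := h.lamDepth_le
    simp only [Tm.lamDepth]; omega
  | _, _, .closL h => by
    have := h.lamDepth_le
    simp only [Tm.lamDepth]; omega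

theorem StepSub.lamDepth_le : ∀ {s q : Subst}, StepSub false s q → q.lamDepth ≤ s.lamDepth
  | _, _, .ass | _, _, .idR | _, _, .idShift | _, _, .consShift | _, _, .map => by
    simp only [Subst.lamDepth, Tm.lamDepth]; omega
  | _, _, .consL h | _, _, .compL h | _, _, .compR h => by
    have := h.lamDepth_le
    simp only [Subst.lamDepth]; omega
  | _, _, .consR h => by
    have := h.lamDepth_le
    simp only [Subst.lamDepth]; omega

end

/-! ### The interpretation in trees -/

open Classical in
/-- The label of the abstraction `λa.M`: zero unless (α₁) applies to it, in which case it has to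
exceed the label `2 * M.lamDepth + 1` of the closure that (α₁) introduces. -/
noncomputable def lamLabel (a : ℕ) (M : Tm) : ℕ :=
  if a ∈ tail (FV (.lam a M)) 0 then 2 * M.lamDepth + 2 else 0

theorem lamLabel_le (a : ℕ) (M : Tm) : lamLabel a M ≤ 2 * M.lamDepth + 2 := by
  unfold lamLabel
  split <;> omega

theorem lamLabel_of_mem {a : ℕ} {M : Tm} (h : ∃ i, a ∈ FV (.lam a M) i) :
    lamLabel a M = 2 * M.lamDepth + 2 :=
  if_pos (mem_tail_zero.2 h)

theorem lamLabel_rename {a b : ℕ} {M : Tm} (h : ∀ i, b ∉ FV (.lam a M) i) :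
    lamLabel b (.clos (.cons (.pi b) (.var b) a) M) = 0 := by
  rw [lamLabel, FV_lam_rename, mem_tail_zero]
  exact if_neg (not_exists.2 h)

theorem StepTm.lamLabel_le {M N : Tm} (a : ℕ) (h : StepTm false M N) :
    lamLabel a N ≤ lamLabel a M := by
  by_cases ha : a ∈ tail (FV (.lam a N)) 0
  · have ha' : a ∈ tail (FV (.lam a M)) 0 := (StepTm.lamCong h).tail_FV_le 0 ha
    have := h.lamDepth_le
    rw [lamLabel, lamLabel, if_pos ha, if_pos ha']
    omega
  · exact (if_neg ha).trans_le (Nat.zero_le _)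

mutual

/-- The interpretation of terms as labelled trees. Closures and compositions of abstraction depth
`d` get the label `2 * d + 1`, interleaved with the labels of the abstractions to which (α₁)
applies; all other nodes are labelled `0`. -/
noncomputable def Tm.toTree : Tm → BinaryTree ℕ
  | .var _ => .nil
  | .app M N => .node 0 M.toTree N.toTree
  | .lam a M => .node (lamLabel a M) M.toTree .nil
  | .clos s M => .node (2 * (s.lamDepth + M.lamDepth) + 1) s.toTree M.toTree

/-- The interpretation of substitutions as labelled trees; see `Tm.toTree`. -/
noncomputable def Subst.toTree : Subst → BinaryTree ℕ
  | .id => .nil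
  | .pi _ => .nil
  | .cons s N _ => .node 0 s.toTree N.toTree
  | .comp s q => .node (2 * (s.lamDepth + q.lamDepth) + 1) s.toTree q.toTree

end

theorem toTree_abs_lt (s : Subst) (a : ℕ) (M : Tm) :
    LexPathLT (Tm.lam a (.clos (.cons (.comp (.pi a) s) (.var a) a) M)).toTree
      (Tm.clos s (.lam a M)).toTree := by
  have hlabel := lamLabel_le a (.clos (.cons (.comp (.pi a) s) (.var a) a) M)
  simp only [Tm.toTree, Subst.toTree, Tm.lamDepth, Subst.lamDepth] at hlabel ⊢
  refine .label (by omega) (.label (by omega) ?lift (.of_lt_right .left)) .nil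
  case lift => exact .label (by omega) (.label (by omega) .nil .left) .nil

theorem toTree_alpha1_lt {a b : ℕ} {M : Tm} (ha : ∃ i, a ∈ FV (.lam a M) i)
    (hb : ∀ i, b ∉ FV (.lam a M) i) :
    LexPathLT (Tm.lam b (.clos (.cons (.pi b) (.var b) a) M)).toTree (Tm.lam a M).toTree := by
  simp only [Tm.toTree, Subst.toTree, Subst.lamDepth, Tm.lamDepth, lamLabel_of_mem ha,
    lamLabel_rename hb]
  exact .label (by omega) (.label (by omega) (.label (by omega) .nil .nil) .left) .nil

open LexPathLT in
mutual

theorem StepTm.toTree_lt : ∀ {M N : Tm}, StepTm false M N → LexPathLT N.toTree M.toTree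
  | _, _, .abs => toTree_abs_lt _ _ _
  | _, _, .app => by
    simp only [Tm.toTree, Tm.lamDepth]
    exact node_distrib (by omega) (by omega) (by omega)
  | _, _, .consVar => .of_lt_left .right
  | _, _, .new _ => by
    simp only [Tm.toTree, Subst.toTree, Tm.lamDepth, Subst.lamDepth]
    exact node_of_left_lt (by omega) .left
  | _, _, .idVar => .nil
  | _, _, .clos => by
    simp only [Tm.toTree, Subst.toTree, Tm.lamDepth, Subst.lamDepth]
    exact node_assoc (by omega) (by omega)
  | _, _, .pi1 _ => .nil
  | _, _, .pi2 _ => by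
    simp only [Tm.toTree, Subst.toTree, Tm.lamDepth, Subst.lamDepth]
    exact node_of_left_lt (by omega) .left
  | _, _, .alpha1 ha hb => toTree_alpha1_lt ha hb
  | _, _, .lamCong h => node_of_left_lt (h.lamLabel_le _) h.toTree_lt
  | _, _, .appL h => .lex_left h.toTree_lt
  | _, _, .appR h => .lex_right h.toTree_lt .left
  | _, _, .closL h => by
    have := h.lamDepth_le
    exact node_of_left_lt (by omega) h.toTree_lt
  | _, _, .closR h => by
    have := h.lamDepth_le
    exact node_of_right_lt (by omega) h.toTree_lt .left

theorem StepSub.toTree_lt : ∀ {s q : Subst}, StepSub false s q → LexPathLT q.toTree s.toTree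
  | _, _, .ass => by
    simp only [Subst.toTree, Subst.lamDepth]
    exact node_assoc (by omega) (by omega)
  | _, _, .idR => .left
  | _, _, .idShift => .nil
  | _, _, .consShift => .of_lt_left .left
  | _, _, .map => by
    simp only [Subst.toTree, Tm.toTree, Subst.lamDepth]
    exact node_distrib (by omega) (by omega) (by omega)
  | _, _, .consL h => .lex_left h.toTree_lt
  | _, _, .consR h => .lex_right h.toTree_lt .left
  | _, _, .compL h => by
    have := h.lamDepth_le
    exact node_of_left_lt (by omega) h.toTree_lt
  | _, _, .compR h => by
    have := h.lamDepth_le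
    exact node_of_right_lt (by omega) h.toTree_lt .left

end

theorem StepTm.wellFounded_swap : WellFounded (Function.swap (StepTm false)) :=
  Subrelation.wf (fun h => h.toTree_lt) (InvImage.wf Tm.toTree LexPathLT.wellFounded)

theorem StepSub.wellFounded_swap : WellFounded (Function.swap (StepSub false)) :=
  Subrelation.wf (fun h => h.toTree_lt) (InvImage.wf Subst.toTree LexPathLT.wellFounded)

/-! ### Judgements as iterated abstractions -/

section Judgements

open Relation

variable {β : Bool}

theorem lamCtx_append (Δ Γ : List ℕ) (M : Tm) : lamCtx (Δ ++ Γ) M = lamCtx Γ (lamCtx Δ M) := by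
  induction Δ generalizing M with
  | nil => rfl
  | cons _ _ ih => exact ih _

theorem StepTm.lamCtxCong {M N : Tm} (Γ : List ℕ) (h : StepTm β M N) :
    StepTm β (lamCtx Γ M) (lamCtx Γ N) := by
  induction Γ generalizing M N with
  | nil => exact h
  | cons _ _ ih => exact ih h.lamCong

theorem StepTm.reflTransGen_clos_lamCtx (Δ : List ℕ) (s : Subst) (M : Tm) :
    ReflTransGen (StepTm β) (.clos s (lamCtx Δ M)) (lamCtx Δ (.clos (Uparrow Δ s) M)) := by
  induction Δ generalizing M with
  | nil => exact .refl
  | cons a Δ ih => exact (ih _).tail (StepTm.abs.lamCtxCong Δ)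

theorem StepJ.transGen_lamCtx {J K : List ℕ × Tm} (h : StepJ β J K) :
    TransGen (StepTm β) (lamCtx J.1 J.2) (lamCtx K.1 K.2) := by
  cases h with
  | step h => exact .single (h.lamCtxCong _)
  | @alpha2 Γ Δ a b M ha hb =>
    simp only [FVJ, lamCtx_append] at ha hb
    simp only [lamCtx_append]
    have push := (StepTm.reflTransGen_clos_lamCtx (β := β) Δ (.cons (.pi b) (.var b) a) M).lift
      (fun N => lamCtx Γ (.lam b N)) fun _ _ h => h.lamCong.lamCtxCong Γ
    exact .head' ((StepTm.alpha1 ha hb).lamCtxCong Γ) push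

theorem StepJ.wellFounded_swap : WellFounded (Function.swap (StepJ false)) :=
  Subrelation.wf (fun h => transGen_swap.2 h.transGen_lamCtx)
    (InvImage.wf (fun J : List ℕ × Tm => lamCtx J.1 J.2) StepTm.wellFounded_swap.transGen)

end Judgements

/-- σπα is strongly normalizing on terms, substitutions, and judgements. -/
theorem spa_strongly_normalizing :
    (¬ ∃ f : ℕ → Tm, ∀ n, StepTm false (f n) (f (n + 1))) ∧
    (¬ ∃ f : ℕ → Subst, ∀ n, StepSub false (f n) (f (n + 1))) ∧
    (¬ ∃ f : ℕ → List ℕ × Tm, ∀ n, StepJ false (f n) (f (n + 1))) :=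
  ⟨not_exists_chain_of_wellFounded_swap StepTm.wellFounded_swap,
    not_exists_chain_of_wellFounded_swap StepSub.wellFounded_swap,
    not_exists_chain_of_wellFounded_swap StepJ.wellFounded_swap⟩
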